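/- arXiv:1910.12666 — 5 statements merged into one kernel-verified Lean document; each statement's English description precedes it below -/
import Mathlib

section
/- Let |ψ⟩ be a unit vector in ℂ^{d_A} ⊗ ℂ^{d_B} ⊗ ℂ². Suppose there are Hermitian observables X₀, X₁ on ℂ^{d_A} and Y₀, Y₁ on ℂ^{d_B}, each with eigenvalues ±1, such that with Charlie's observables Z₀ = σx, Z₁ = σy, the four conditioning events in CP have positive probability and CP = 4 (the algebraic maximum). Then |ψ⟩ is genuinely multipartite entangled: it does not factorize as a tensor product of a vector on one subsystem with a vector on the remaining two subsystems across any of the three bipartitions A|BC, B|AC, C|AB. -/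
open Matrix Complex
open scoped Matrix Kronecker ComplexOrder

noncomputable section
namespace Paper

/-- Pauli X. -/
def sx : Matrix (Fin 2) (Fin 2) ℂ := !![0, 1; 1, 0]
/-- Pauli Y. -/
def sy : Matrix (Fin 2) (Fin 2) ℂ := !![0, -Complex.I; Complex.I, 0]
/-- Pauli Z. -/
def sz : Matrix (Fin 2) (Fin 2) ℂ := !![1, 0; 0, -1]

/-- Projector onto outcome `a ∈ {0,1}` of a dichotomic observable `O`:
`Π₀ = (I+O)/2`, `Π₁ = (I−O)/2`. -/
def Proj {d : ℕ} (a : Fin 2) (O : Matrix (Fin d) (Fin d) ℂ) : Matrix (Fin d) (Fin d) ℂ :=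
  (2 : ℂ)⁻¹ • (1 + if a = 0 then O else -O)

/-- Outer product `|ψ⟩⟨ψ|`. -/
def outer {n : Type*} (ψ : n → ℂ) : Matrix n n ℂ :=
  Matrix.of fun i j => ψ i * star (ψ j)

/-- `ψ` is a unit vector. -/
def UnitVec {n : Type*} [Fintype n] (ψ : n → ℂ) : Prop := ∑ i, star (ψ i) * ψ i = 1

/-- Hermitian observable with eigenvalues `±1`. -/
def Dichotomic {d : ℕ} (O : Matrix (Fin d) (Fin d) ℂ) : Prop := O.IsHermitian ∧ O * O = 1

/-- Partial trace over the first two tensor factors. -/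
def trAB {dA dB : ℕ} (M : Matrix (Fin dA × Fin dB × Fin 2) (Fin dA × Fin dB × Fin 2) ℂ) :
    Matrix (Fin 2) (Fin 2) ℂ :=
  Matrix.of fun i j => ∑ k : Fin dA, ∑ l : Fin dB, M (k, l, i) (k, l, j)

/-- Unnormalized conditional state on Charlie's qubit:
`σ^C_{a,b|X,Y} = Tr_{AB}[(Π_{a|X} ⊗ Π_{b|Y} ⊗ I₂) ρ]`. -/
def condState {dA dB : ℕ} (ρ : Matrix (Fin dA × Fin dB × Fin 2) (Fin dA × Fin dB × Fin 2) ℂ)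
    (X : Matrix (Fin dA) (Fin dA) ℂ) (Y : Matrix (Fin dB) (Fin dB) ℂ) (a b : Fin 2) :
    Matrix (Fin 2) (Fin 2) ℂ :=
  trAB ((Proj a X ⊗ₖ (Proj b Y ⊗ₖ (1 : Matrix (Fin 2) (Fin 2) ℂ))) * ρ)

/-- Conditional probability `P(c_Z | ·) = Tr[Π_{c|Z} σ] / Tr[σ]`. -/
def condProb (Z σ : Matrix (Fin 2) (Fin 2) ℂ) (c : Fin 2) : ℝ :=
  ((Proj c Z * σ).trace).re / (σ.trace).re

/-- The fine-grained steering expression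
`CP = P(0_{Z₀}|1_{X₀}1_{Y₀}) + P(0_{Z₀}|0_{X₁}1_{Y₁}) + P(0_{Z₁}|0_{X₀}1_{Y₁}) + P(0_{Z₁}|0_{X₁}1_{Y₀})`
with `Z₀ = σx`, `Z₁ = σy`. -/
def CP {dA dB : ℕ} (ρ : Matrix (Fin dA × Fin dB × Fin 2) (Fin dA × Fin dB × Fin 2) ℂ)
    (X0 X1 : Matrix (Fin dA) (Fin dA) ℂ) (Y0 Y1 : Matrix (Fin dB) (Fin dB) ℂ) : ℝ :=
  condProb sx (condState ρ X0 Y0 1 1) 0 + condProb sx (condState ρ X1 Y1 0 1) 0 +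
  condProb sy (condState ρ X0 Y1 0 1) 0 + condProb sy (condState ρ X1 Y0 0 1) 0

/-- The four conditioning events in `CP` have positive probability. -/
def PosEvents {dA dB : ℕ} (ρ : Matrix (Fin dA × Fin dB × Fin 2) (Fin dA × Fin dB × Fin 2) ℂ)
    (X0 X1 : Matrix (Fin dA) (Fin dA) ℂ) (Y0 Y1 : Matrix (Fin dB) (Fin dB) ℂ) : Prop :=
  0 < ((condState ρ X0 Y0 1 1).trace).re ∧ 0 < ((condState ρ X1 Y1 0 1).trace).re ∧
  0 < ((condState ρ X0 Y1 0 1).trace).re ∧ 0 < ((condState ρ X1 Y0 0 1).trace).re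

/-- Product across the bipartition `A|BC`. -/
def BisepA {dA dB : ℕ} (ψ : Fin dA × Fin dB × Fin 2 → ℂ) : Prop :=
  ∃ (u : Fin dA → ℂ) (v : Fin dB × Fin 2 → ℂ), ∀ i j k, ψ (i, j, k) = u i * v (j, k)

/-- Product across the bipartition `B|AC`. -/
def BisepB {dA dB : ℕ} (ψ : Fin dA × Fin dB × Fin 2 → ℂ) : Prop :=
  ∃ (u : Fin dB → ℂ) (v : Fin dA × Fin 2 → ℂ), ∀ i j k, ψ (i, j, k) = u j * v (i, k)

/-- Product across the bipartition `C|AB`. -/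
def BisepC {dA dB : ℕ} (ψ : Fin dA × Fin dB × Fin 2 → ℂ) : Prop :=
  ∃ (u : Fin 2 → ℂ) (v : Fin dA × Fin dB → ℂ), ∀ i j k, ψ (i, j, k) = v (i, j) * u k

/-- Genuine multipartite entanglement: not a product across any bipartition. -/
def GenEnt {dA dB : ℕ} (ψ : Fin dA × Fin dB × Fin 2 → ℂ) : Prop :=
  ¬ BisepA ψ ∧ ¬ BisepB ψ ∧ ¬ BisepC ψ

/-!
If `CP = 4`, each of the four conditional probabilities equals `1`, and a state on which outcome `0`
of `Z` is certain satisfies `Z σ = σ`. For a state that is a product across some bipartition,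
changing the measurement of a factored-out party only rescales Charlie's conditional state (across
`C|AB`, any change does). Two events of `CP`, one testing `σx` and the other `σy`, then yield
proportional nonzero matrices, hence a nonzero `ω` with `σx ω = ω = σy ω`. But `σx` and `σy`
anticommute, so `ω = σx σy ω = -σy σx ω = -ω`.
-/

section Matrices

variable {n 𝕜 : Type*} [Fintype n] [RCLike 𝕜] {A B : Matrix n n 𝕜}

open scoped MatrixOrder in
theorem posSemidef_of_isStarProjection (hA : IsStarProjection A) : A.PosSemidef :=
  nonneg_iff_posSemidef.mp hA.nonneg

open scoped MatrixOrder in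
theorem trace_mul_nonneg_of_posSemidef (hA : A.PosSemidef) (hB : B.PosSemidef) :
    0 ≤ (A * B).trace := by
  classical
  obtain ⟨C, rfl⟩ := CStarAlgebra.nonneg_iff_eq_star_mul_self.mp hA.nonneg
  rw [Matrix.mul_assoc, trace_mul_comm]
  exact (hB.mul_mul_conjTranspose_same C).trace_nonneg

open scoped MatrixOrder in
theorem mul_eq_zero_of_trace_mul_eq_zero (hA : A.PosSemidef) (hB : B.PosSemidef)
    (h : (A * B).trace = 0) : A * B = 0 := by
  classical
  obtain ⟨C, rfl⟩ := CStarAlgebra.nonneg_iff_eq_star_mul_self.mp hA.nonneg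
  obtain ⟨D, rfl⟩ := CStarAlgebra.nonneg_iff_eq_star_mul_self.mp hB.nonneg
  simp only [star_eq_conjTranspose] at h ⊢
  have htrace : ((C * Dᴴ) * (C * Dᴴ)ᴴ).trace = 0 := by
    rw [← h, Matrix.mul_assoc Cᴴ, trace_mul_comm Cᴴ, conjTranspose_mul,
      conjTranspose_conjTranspose]
    simp only [Matrix.mul_assoc]
  have hCD : C * Dᴴ = 0 := trace_mul_conjTranspose_self_eq_zero_iff.mp htrace
  rw [Matrix.mul_assoc, ← Matrix.mul_assoc C, hCD, Matrix.zero_mul, Matrix.mul_zero]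

end Matrices

section Kronecker

variable {l l' m m' o R : Type*} [Fintype m] [Fintype m'] [CommSemiring R] [StarRing R]

theorem conjTranspose_mul_kronecker_mul_submatrix (P : Matrix m m R) (Q : Matrix m' m' R)
    (A : Matrix m l R) (B : Matrix m' l' R) (e : o → l × l') :
    ((A ⊗ₖ B).submatrix id e)ᴴ * ((P ⊗ₖ Q) * (A ⊗ₖ B).submatrix id e) =
      ((Aᴴ * (P * A)) ⊗ₖ (Bᴴ * (Q * B))).submatrix e e := by
  rw [mul_kronecker_mul, mul_kronecker_mul, ← conjTranspose_kronecker,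
    submatrix_mul _ _ e id e Function.bijective_id,
    submatrix_mul _ _ id id e Function.bijective_id, conjTranspose_submatrix, submatrix_id_id]

end Kronecker

theorem eq_neg_of_mul_eq_self_of_anticommute {R : Type*} [NonUnitalRing R] {x y w : R}
    (hxy : x * y = -(y * x)) (hx : x * w = w) (hy : y * w = w) : w = -w :=
  calc w = x * y * w := by rw [mul_assoc, hy, hx]
    _ = -w := by rw [hxy, neg_mul, mul_assoc, hx, hy]

theorem eq_zero_or_eq_zero_of_mem_span_of_anticommute {K R : Type*} [Field K] [NeZero (2 : K)]
    [Ring R] [Algebra K R] {x y s t w : R} (hxy : x * y = -(y * x))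
    (hs : s ∈ K ∙ w) (ht : t ∈ K ∙ w) (hxs : x * s = s) (hyt : y * t = t) :
    s = 0 ∨ t = 0 := by
  obtain ⟨c, rfl⟩ := Submodule.mem_span_singleton.mp hs
  obtain ⟨d, rfl⟩ := Submodule.mem_span_singleton.mp ht
  rw [mul_smul_comm] at hxs hyt
  rcases eq_or_ne c 0 with rfl | hc
  · exact .inl (zero_smul K w)
  rcases eq_or_ne d 0 with rfl | hd
  · exact .inr (zero_smul K w)
  have hneg : w = -w := eq_neg_of_mul_eq_self_of_anticommute hxy
    (smul_right_injective R hc hxs) (smul_right_injective R hd hyt)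
  have htwo : (2 : K) • w = 0 := by rw [two_smul, add_eq_zero_iff_eq_neg, ← hneg]
  have hw : w = 0 := (smul_eq_zero_iff_right two_ne_zero).mp htwo
  exact .inl (by rw [hw, smul_zero])

section Observables

variable {d : ℕ} {O : Matrix (Fin d) (Fin d) ℂ}

theorem Dichotomic.neg (hO : Dichotomic O) : Dichotomic (-O) :=
  ⟨hO.1.neg, by rw [neg_mul_neg, hO.2]⟩

theorem Dichotomic.isStarProjection_half_one_add (hO : Dichotomic O) :
    IsStarProjection ((2 : ℂ)⁻¹ • (1 + O)) where
  isIdempotentElem := by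
    have hsq : (1 + O) * (1 + O) = (2 : ℂ) • (1 + O) := by
      rw [mul_add, add_mul, add_mul, hO.2, one_mul, mul_one, one_mul, two_smul, add_comm O 1]
    rw [IsIdempotentElem, smul_mul_smul_comm, hsq, smul_smul]
    norm_num
  isSelfAdjoint := by
    simp [isSelfAdjoint_iff, star_eq_conjTranspose, hO.1.eq]

theorem Dichotomic.isStarProjection_proj (hO : Dichotomic O) (a : Fin 2) :
    IsStarProjection (Proj a O) := by
  unfold Proj
  split_ifs
  exacts [hO.isStarProjection_half_one_add, hO.neg.isStarProjection_half_one_add]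

theorem mul_eq_self_of_proj_zero_mul_eq_self {M : Matrix (Fin d) (Fin d) ℂ}
    (h : Proj 0 O * M = M) : O * M = M := by
  have hsum : M + O * M = (2 : ℂ) • M := by
    rw [← inv_smul_eq_iff₀ two_ne_zero]
    simpa [Proj, add_mul] using h
  rwa [two_smul, add_right_inj] at hsum

theorem dichotomic_sx : Dichotomic sx := by
  constructor
  · ext i j; fin_cases i <;> fin_cases j <;> simp [sx]
  · ext i j; fin_cases i <;> fin_cases j <;> simp [sx]

theorem dichotomic_sy : Dichotomic sy := by
  constructor
  · ext i j; fin_cases i <;> fin_cases j <;> simp [sy]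
  · ext i j; fin_cases i <;> fin_cases j <;> simp [sy]

theorem sx_mul_sy : sx * sy = -(sy * sx) := by
  simp [sx, sy]

end Observables

section ConditionalProbability

variable {Z σ : Matrix (Fin 2) (Fin 2) ℂ}

theorem condProb_le_one (hZ : Dichotomic Z) (hσ : σ.PosSemidef) (c : Fin 2) :
    condProb Z σ c ≤ 1 := by
  have hcompl := trace_mul_nonneg_of_posSemidef
    (posSemidef_of_isStarProjection (hZ.isStarProjection_proj c).one_sub) hσ
  rw [sub_mul, one_mul, trace_sub, sub_nonneg] at hcompl
  exact div_le_one_of_le₀ (Complex.le_def.mp hcompl).1 (Complex.le_def.mp hσ.trace_nonneg).1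

theorem proj_mul_eq_self_of_condProb_eq_one (hZ : Dichotomic Z) (hσ : σ.PosSemidef)
    (hpos : 0 < σ.trace.re) {c : Fin 2} (h : condProb Z σ c = 1) : Proj c Z * σ = σ := by
  have hcompl := posSemidef_of_isStarProjection (hZ.isStarProjection_proj c).one_sub
  have hre : (Proj c Z * σ).trace.re = σ.trace.re := (div_eq_one_iff_eq hpos.ne').mp h
  have htrace : ((1 - Proj c Z) * σ).trace = 0 := by
    refine Complex.ext ?_ (Complex.le_def.mp (trace_mul_nonneg_of_posSemidef hcompl hσ)).2.symm
    rw [sub_mul, one_mul, trace_sub, sub_re, hre, sub_self, zero_re]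
  have hzero := mul_eq_zero_of_trace_mul_eq_zero hcompl hσ htrace
  rw [sub_mul, one_mul, sub_eq_zero] at hzero
  exact hzero.symm

theorem not_mem_span_of_condProb_eq_one {Z' τ ω : Matrix (Fin 2) (Fin 2) ℂ}
    (hZ : Dichotomic Z) (hZ' : Dichotomic Z') (hZZ' : Z * Z' = -(Z' * Z))
    (hσ : σ.PosSemidef) (hτ : τ.PosSemidef) (hσpos : 0 < σ.trace.re) (hτpos : 0 < τ.trace.re)
    (hσZ : condProb Z σ 0 = 1) (hτZ' : condProb Z' τ 0 = 1) (hσω : σ ∈ ℂ ∙ ω) : τ ∉ ℂ ∙ ω := by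
  intro hτω
  have hZσ : Z * σ = σ := mul_eq_self_of_proj_zero_mul_eq_self
    (proj_mul_eq_self_of_condProb_eq_one hZ hσ hσpos hσZ)
  have hZ'τ : Z' * τ = τ := mul_eq_self_of_proj_zero_mul_eq_self
    (proj_mul_eq_self_of_condProb_eq_one hZ' hτ hτpos hτZ')
  rcases eq_zero_or_eq_zero_of_mem_span_of_anticommute hZZ' hσω hτω hZσ hZ'τ with rfl | rfl
  · simp at hσpos
  · simp at hτpos

end ConditionalProbability

section ConditionalState

variable {dA dB : ℕ} {ψ : Fin dA × Fin dB × Fin 2 → ℂ}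

/-- The amplitudes of `ψ` as a matrix with rows indexed by `AB` and columns by Charlie's qubit, so
that measuring `AB` becomes multiplication on the left. -/
def amplitudeMatrix (ψ : Fin dA × Fin dB × Fin 2 → ℂ) : Matrix (Fin dA × Fin dB) (Fin 2) ℂ :=
  of fun p k ↦ ψ (p.1, p.2, k)

theorem condState_outer (ψ : Fin dA × Fin dB × Fin 2 → ℂ) (X : Matrix (Fin dA) (Fin dA) ℂ)
    (Y : Matrix (Fin dB) (Fin dB) ℂ) (a b : Fin 2) :
    condState (outer ψ) X Y a b =
      ((amplitudeMatrix ψ)ᴴ * ((Proj a X ⊗ₖ Proj b Y) * amplitudeMatrix ψ))ᵀ := by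
  ext i j
  calc condState (outer ψ) X Y a b i j
      = ∑ p : Fin dA × Fin dB, ∑ q : Fin dA × Fin dB,
          Proj a X p.1 q.1 * Proj b Y p.2 q.2 * (ψ (q.1, q.2, i) * star (ψ (p.1, p.2, j))) := by
        simp [condState, trAB, outer, mul_apply, one_apply, Fintype.sum_prod_type, mul_assoc]
    _ = ((amplitudeMatrix ψ)ᴴ * ((Proj a X ⊗ₖ Proj b Y) * amplitudeMatrix ψ))ᵀ i j := by
        simp only [amplitudeMatrix, mul_apply, transpose_apply, conjTranspose_apply, of_apply,
          kroneckerMap_apply, Finset.mul_sum]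
        exact Finset.sum_congr rfl fun p _ ↦ Finset.sum_congr rfl fun q _ ↦ by ring

theorem condState_outer_posSemidef {X : Matrix (Fin dA) (Fin dA) ℂ}
    {Y : Matrix (Fin dB) (Fin dB) ℂ} (hX : Dichotomic X) (hY : Dichotomic Y) (a b : Fin 2) :
    (condState (outer ψ) X Y a b).PosSemidef := by
  have hproj := (posSemidef_of_isStarProjection (hX.isStarProjection_proj a)).kronecker
    (posSemidef_of_isStarProjection (hY.isStarProjection_proj b))
  rw [condState_outer, ← Matrix.mul_assoc]
  exact (hproj.conjTranspose_mul_mul_same _).transpose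

theorem BisepA.exists_condState_mem_span (h : BisepA ψ) (Y : Matrix (Fin dB) (Fin dB) ℂ)
    (b : Fin 2) : ∃ ω : Matrix (Fin 2) (Fin 2) ℂ, ∀ (X : Matrix (Fin dA) (Fin dA) ℂ) (a : Fin 2),
      condState (outer ψ) X Y a b ∈ ℂ ∙ ω := by
  obtain ⟨u, v, huv⟩ := h
  let U : Matrix (Fin dA) Unit ℂ := replicateCol Unit u
  let V : Matrix (Fin dB) (Fin 2) ℂ := of fun j k ↦ v (j, k)
  have hψ : amplitudeMatrix ψ = (U ⊗ₖ V).submatrix id (Prod.mk ()) := by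
    ext p k
    simp [amplitudeMatrix, huv, U, V]
  refine ⟨(Vᴴ * (Proj b Y * V))ᵀ, fun X a ↦ Submodule.mem_span_singleton.mpr
    ⟨(Uᴴ * (Proj a X * U)) () (), ?_⟩⟩
  rw [condState_outer, hψ, conjTranspose_mul_kronecker_mul_submatrix]
  rfl

theorem BisepB.exists_condState_mem_span (h : BisepB ψ) (X : Matrix (Fin dA) (Fin dA) ℂ)
    (a : Fin 2) : ∃ ω : Matrix (Fin 2) (Fin 2) ℂ, ∀ (Y : Matrix (Fin dB) (Fin dB) ℂ) (b : Fin 2),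
      condState (outer ψ) X Y a b ∈ ℂ ∙ ω := by
  obtain ⟨u, v, huv⟩ := h
  let U : Matrix (Fin dB) Unit ℂ := replicateCol Unit u
  let V : Matrix (Fin dA) (Fin 2) ℂ := of fun i k ↦ v (i, k)
  have hψ : amplitudeMatrix ψ = (V ⊗ₖ U).submatrix id (·, ()) := by
    ext p k
    simp [amplitudeMatrix, huv, U, V, mul_comm]
  refine ⟨(Vᴴ * (Proj a X * V))ᵀ, fun Y b ↦ Submodule.mem_span_singleton.mpr
    ⟨(Uᴴ * (Proj b Y * U)) () (), ?_⟩⟩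
  rw [condState_outer, hψ, conjTranspose_mul_kronecker_mul_submatrix]
  ext i j
  exact mul_comm _ _

theorem BisepC.exists_condState_mem_span (h : BisepC ψ) :
    ∃ ω : Matrix (Fin 2) (Fin 2) ℂ, ∀ (X : Matrix (Fin dA) (Fin dA) ℂ)
      (Y : Matrix (Fin dB) (Fin dB) ℂ) (a b : Fin 2),
      condState (outer ψ) X Y a b ∈ ℂ ∙ ω := by
  obtain ⟨u, v, huv⟩ := h
  have hψ : amplitudeMatrix ψ = vecMulVec v u := by
    ext p k
    simp [amplitudeMatrix, huv, vecMulVec_apply]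
  refine ⟨vecMulVec u (star u), fun X Y a b ↦ Submodule.mem_span_singleton.mpr
    ⟨star v ⬝ᵥ (Proj a X ⊗ₖ Proj b Y) *ᵥ v, ?_⟩⟩
  rw [condState_outer, hψ, conjTranspose_vecMulVec, mul_vecMulVec, vecMulVec_mul_vecMulVec,
    transpose_vecMulVec, smul_vecMulVec]

variable {X0 X1 : Matrix (Fin dA) (Fin dA) ℂ} {Y0 Y1 : Matrix (Fin dB) (Fin dB) ℂ}

theorem condProb_eq_one_of_CP_eq_four (hX0 : Dichotomic X0) (hX1 : Dichotomic X1)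
    (hY0 : Dichotomic Y0) (hY1 : Dichotomic Y1) (hCP : CP (outer ψ) X0 X1 Y0 Y1 = 4) :
    condProb sx (condState (outer ψ) X0 Y0 1 1) 0 = 1 ∧
    condProb sx (condState (outer ψ) X1 Y1 0 1) 0 = 1 ∧
    condProb sy (condState (outer ψ) X0 Y1 0 1) 0 = 1 ∧
    condProb sy (condState (outer ψ) X1 Y0 0 1) 0 = 1 := by
  have hx₀₀ := condProb_le_one dichotomic_sx (condState_outer_posSemidef (ψ := ψ) hX0 hY0 1 1) 0
  have hx₁₁ := condProb_le_one dichotomic_sx (condState_outer_posSemidef (ψ := ψ) hX1 hY1 0 1) 0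
  have hy₀₁ := condProb_le_one dichotomic_sy (condState_outer_posSemidef (ψ := ψ) hX0 hY1 0 1) 0
  have hy₁₀ := condProb_le_one dichotomic_sy (condState_outer_posSemidef (ψ := ψ) hX1 hY0 0 1) 0
  unfold CP at hCP
  refine ⟨?_, ?_, ?_, ?_⟩ <;> linarith

end ConditionalState

/-- maximal violation `CP = 4` of the fine-grained inequality by a pure state
on `ℂ^{dA} ⊗ ℂ^{dB} ⊗ ℂ²` certifies genuine multipartite entanglement. -/
theorem stmt0 {dA dB : ℕ} (ψ : Fin dA × Fin dB × Fin 2 → ℂ) (hψ : UnitVec ψ)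
    (X0 X1 : Matrix (Fin dA) (Fin dA) ℂ) (Y0 Y1 : Matrix (Fin dB) (Fin dB) ℂ)
    (hX0 : Dichotomic X0) (hX1 : Dichotomic X1) (hY0 : Dichotomic Y0) (hY1 : Dichotomic Y1)
    (hpos : PosEvents (outer ψ) X0 X1 Y0 Y1)
    (hCP : CP (outer ψ) X0 X1 Y0 Y1 = 4) :
    GenEnt ψ := by
  obtain ⟨pos₀₀, pos₁₁, -, pos₁₀⟩ := hpos
  obtain ⟨hx₀₀, hx₁₁, -, hy₁₀⟩ := condProb_eq_one_of_CP_eq_four hX0 hX1 hY0 hY1 hCP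
  have hσ₀₀ := condState_outer_posSemidef (ψ := ψ) hX0 hY0 1 1
  have hσ₁₁ := condState_outer_posSemidef (ψ := ψ) hX1 hY1 0 1
  have hσ₁₀ := condState_outer_posSemidef (ψ := ψ) hX1 hY0 0 1
  have hclash₀₀ {ω} := not_mem_span_of_condProb_eq_one (ω := ω) dichotomic_sx dichotomic_sy
    sx_mul_sy hσ₀₀ hσ₁₀ pos₀₀ pos₁₀ hx₀₀ hy₁₀
  have hclash₁₁ {ω} := not_mem_span_of_condProb_eq_one (ω := ω) dichotomic_sx dichotomic_sy
    sx_mul_sy hσ₁₁ hσ₁₀ pos₁₁ pos₁₀ hx₁₁ hy₁₀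
  refine ⟨fun hA ↦ ?_, fun hB ↦ ?_, fun hC ↦ ?_⟩
  · obtain ⟨ω, hω⟩ := hA.exists_condState_mem_span Y0 1
    exact hclash₀₀ (hω X0 1) (hω X1 0)
  · obtain ⟨ω, hω⟩ := hB.exists_condState_mem_span X1 0
    exact hclash₁₁ (hω Y1 1) (hω Y0 1)
  · obtain ⟨ω, hω⟩ := hC.exists_condState_mem_span
    exact hclash₀₀ (hω X0 Y0 1 1) (hω X1 Y0 0 1)

end Paper
end
end

section
/- Let θ ∈ (0, π/2) and let |ψ(θ)⟩ = cos θ·|000⟩ + sin θ·|111⟩ be the generalized GHZ state. Let Alice measure X₀ = σx, X₁ = σy, and define the unnormalized conditional states on the Bob–Charlie pair σ^{BC}_{a|X_x} = Tr_A[(Π_{a|X_x} ⊗ I₄) |ψ(θ)⟩⟨ψ(θ)|] (partial trace over the first qubit). Then there exist no n ∈ ℕ, weights p : Fin n → ℝ with p(λ) ≥ 0 and Σ_λ p(λ) = 1, two-qubit density matrices ρ^{BC}_λ (4×4 positive semidefinite, trace 1), and numbers P_A(a|x,λ) ∈ [0,1] with Σ_a P_A(a|x,λ) = 1, such that σ^{BC}_{a|X_x}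 = Σ_λ p(λ)·P_A(a|x,λ)·ρ^{BC}_λ for all a, x ∈ {0,1}. -/
open Matrix Complex
open scoped Matrix Kronecker ComplexOrder

noncomputable section
namespace Paper

/-- Alice's observables `X₀ = σx`, `X₁ = σy`. -/
def XA : Fin 2 → Matrix (Fin 2) (Fin 2) ℂ := fun x => if x = 0 then sx else sy

/-- Bob's observables `Y₀ = (σx+σz)/√2`, `Y₁ = (σy+σz)/√2`. -/
def YB : Fin 2 → Matrix (Fin 2) (Fin 2) ℂ := fun y =>
  if y = 0 then (Real.sqrt 2 : ℂ)⁻¹ • (sx + sz) else (Real.sqrt 2 : ℂ)⁻¹ • (sy + sz)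

/-- The generalized GHZ state `cos θ·|000⟩ + sin θ·|111⟩`. -/
def ggHZ (θ : ℝ) : Fin 2 × Fin 2 × Fin 2 → ℂ := fun i =>
  if i = (0, 0, 0) then (Real.cos θ : ℂ) else if i = (1, 1, 1) then (Real.sin θ : ℂ) else 0

/-- A local-hidden-state (LHS) model for an assemblage `σa a b x y` of 2×2 matrices. -/
def HasLHS (σa : Fin 2 → Fin 2 → Fin 2 → Fin 2 → Matrix (Fin 2) (Fin 2) ℂ) : Prop :=
  ∃ (n : ℕ) (p : Fin n → ℝ) (ρh : Fin n → Matrix (Fin 2) (Fin 2) ℂ)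
    (PA PB : Fin 2 → Fin 2 → Fin n → ℝ),
    (∀ l, 0 ≤ p l) ∧ (∑ l, p l) = 1 ∧
    (∀ l, (ρh l).PosSemidef ∧ (ρh l).trace = 1) ∧
    (∀ a x l, 0 ≤ PA a x l ∧ PA a x l ≤ 1) ∧
    (∀ b y l, 0 ≤ PB b y l ∧ PB b y l ≤ 1) ∧
    (∀ x l, ∑ a, PA a x l = 1) ∧ (∀ y l, ∑ b, PB b y l = 1) ∧
    (∀ a b x y, σa a b x y = ∑ l, ((p l * PA a x l * PB b y l : ℝ) : ℂ) • ρh l)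

/-- Partial trace over the first qubit of a three-qubit matrix. -/
def trA3 (M : Matrix (Fin 2 × Fin 2 × Fin 2) (Fin 2 × Fin 2 × Fin 2) ℂ) :
    Matrix (Fin 2 × Fin 2) (Fin 2 × Fin 2) ℂ :=
  Matrix.of fun i j => ∑ k : Fin 2, M (k, i.1, i.2) (k, j.1, j.2)

/-- Unnormalized conditional state on the Bob–Charlie pair:
`σ^{BC}_{a|X} = Tr_A[(Π_{a|X} ⊗ I₄) ρ]`. -/
def condStateBC (ρ : Matrix (Fin 2 × Fin 2 × Fin 2) (Fin 2 × Fin 2 × Fin 2) ℂ)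
    (X : Matrix (Fin 2) (Fin 2) ℂ) (a : Fin 2) : Matrix (Fin 2 × Fin 2) (Fin 2 × Fin 2) ℂ :=
  trA3 ((Proj a X ⊗ₖ (1 : Matrix (Fin 2 × Fin 2) (Fin 2 × Fin 2) ℂ)) * ρ)

/-!
The idea: Alice's outcomes steer Bob and Charlie to pure states. In a convex decomposition of a
pure state every component that occurs is proportional to that state. For each setting each hidden
state occurs in the decomposition for some outcome, so it is proportional both to a state steered
to by `σx` and to one steered to by `σy`. If the three-qubit state is entangled across `A|BC`,
these are never parallel, so every hidden state vanishes.
-/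

section LinearAlgebra

theorem mem_span_singleton_of_dotProduct_eq_zero {K n : Type*} [Field K] [Fintype n]
    {f r : n → K} (h : ∀ w, f ⬝ᵥ w = 0 → r ⬝ᵥ w = 0) : r ∈ Submodule.span K {f} := by
  classical
  have hr : dotProductEquiv K n r ∈
      Submodule.span K (Set.range fun _ : Unit => dotProductEquiv K n f) :=
    mem_span_of_iInf_ker_le_ker fun w hw => h w (by simpa using hw)
  obtain ⟨c, hc⟩ := Submodule.mem_span_singleton.mp (by simpa using hr)
  exact Submodule.mem_span_singleton.mpr
    ⟨c, (dotProductEquiv K n).injective (by simpa using hc)⟩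

variable {𝕜 ι m n : Type*} [RCLike 𝕜] [Fintype ι] [Fintype n]

theorem eq_zero_of_mulVec_eq_zero_of_orthogonal {A : Matrix m n 𝕜} {v w : n → 𝕜}
    (hvw : LinearIndependent 𝕜 ![v, w]) (hv : ∀ z, star v ⬝ᵥ z = 0 → A *ᵥ z = 0)
    (hw : ∀ z, star w ⬝ᵥ z = 0 → A *ᵥ z = 0) : A = 0 := by
  funext i
  obtain ⟨s, hs⟩ := Submodule.mem_span_singleton.mp <|
    mem_span_singleton_of_dotProduct_eq_zero fun z hz => congrFun (hv z hz) i
  obtain ⟨t, ht⟩ := Submodule.mem_span_singleton.mp <|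
    mem_span_singleton_of_dotProduct_eq_zero fun z hz => congrFun (hw z hz) i
  have hst : star s • v + (-star t) • w = 0 := by
    simpa [sub_eq_zero, ← sub_eq_add_neg] using congrArg star (hs.trans ht.symm)
  have hs0 : s = 0 := by simpa using (LinearIndependent.pair_iff.mp hvw _ _ hst).1
  rw [hs0, zero_smul] at hs
  exact hs.symm

theorem mulVec_eq_zero_of_sum_mulVec_eq_zero {A : ι → Matrix n n 𝕜} {z : n → 𝕜}
    (hA : ∀ i, (A i).PosSemidef) (hz : (∑ i, A i) *ᵥ z = 0) (i : ι) : A i *ᵥ z = 0 := by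
  have hsum : ∑ i, star z ⬝ᵥ A i *ᵥ z = 0 := by
    rw [← dotProduct_sum, ← sum_mulVec, hz, dotProduct_zero]
  have hnonneg : ∀ i ∈ Finset.univ, 0 ≤ star z ⬝ᵥ A i *ᵥ z := fun i _ =>
    (hA i).dotProduct_mulVec_nonneg z
  exact ((hA i).dotProduct_mulVec_zero_iff z).mp
    ((Finset.sum_eq_zero_iff_of_nonneg hnonneg).mp hsum i (Finset.mem_univ i))

theorem outer_mulVec_eq_zero {v z : n → ℂ} (h : star v ⬝ᵥ z = 0) : outer v *ᵥ z = 0 := by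
  change vecMulVec v (star v) *ᵥ z = 0
  rw [vecMulVec_mulVec, h, MulOpposite.op_zero, zero_smul]

theorem outer_eq_zero_iff {n : Type*} {v : n → ℂ} : outer v = 0 ↔ v = 0 := by
  change vecMulVec v (star v) = 0 ↔ v = 0
  simp

theorem outer_smul {n : Type*} (c : ℂ) (v : n → ℂ) :
    outer (c • v) = (c * star c) • outer v := by
  ext i j
  simpa [outer] using mul_mul_mul_comm c (v i) (star c) (star (v j))

end LinearAlgebra

section LHS

variable {α ξ Λ n : Type*} [Fintype α] [Fintype Λ]

/-- A local-hidden-state model of the assemblage `σ a x` (outcome `a`, setting `x`): response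
functions `P a x l` and hidden states `τ l`. The hidden states are subnormalized, i.e. the weight
of the hidden variable `l` is absorbed into `τ l`. -/
structure IsLHSModel (σ : α → ξ → Matrix n n ℂ) (P : α → ξ → Λ → ℝ)
    (τ : Λ → Matrix n n ℂ) : Prop where
  posSemidef : ∀ l, (τ l).PosSemidef
  nonneg : ∀ a x l, 0 ≤ P a x l
  sum_eq_one : ∀ x l, ∑ a, P a x l = 1
  eq_sum : ∀ a x, σ a x = ∑ l, P a x l • τ l

namespace IsLHSModel

variable {σ : α → ξ → Matrix n n ℂ} {P : α → ξ → Λ → ℝ} {τ : Λ → Matrix n n ℂ}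

theorem exists_response_ne_zero (h : IsLHSModel σ P τ) (x : ξ) (l : Λ) : ∃ a, P a x l ≠ 0 := by
  obtain ⟨a, -, ha⟩ := Finset.exists_ne_zero_of_sum_ne_zero
    (ne_of_eq_of_ne (h.sum_eq_one x l) one_ne_zero)
  exact ⟨a, ha⟩

theorem hiddenState_mulVec_eq_zero [Fintype n] (h : IsLHSModel σ P τ) {a : α} {x : ξ} {l : Λ}
    (hP : P a x l ≠ 0) {z : n → ℂ} (hz : σ a x *ᵥ z = 0) : τ l *ᵥ z = 0 := by
  have hPτ : (P a x l • τ l) *ᵥ z = 0 :=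
    mulVec_eq_zero_of_sum_mulVec_eq_zero (fun l => (h.posSemidef l).smul (h.nonneg a x l))
      (h.eq_sum a x ▸ hz) l
  rw [smul_mulVec] at hPτ
  exact (smul_eq_zero.mp hPτ).resolve_left hP

theorem hiddenState_eq_zero [Finite n] (h : IsLHSModel σ P τ) {x y : ξ} {v w : α → n → ℂ}
    (hx : ∀ a, σ a x = outer (v a)) (hy : ∀ b, σ b y = outer (w b))
    (hvw : ∀ a b, LinearIndependent ℂ ![v a, w b]) (l : Λ) : τ l = 0 := by
  have := Fintype.ofFinite n
  obtain ⟨a, ha⟩ := h.exists_response_ne_zero x l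
  obtain ⟨b, hb⟩ := h.exists_response_ne_zero y l
  exact eq_zero_of_mulVec_eq_zero_of_orthogonal (hvw a b)
    (fun z hz => h.hiddenState_mulVec_eq_zero ha (hx a ▸ outer_mulVec_eq_zero hz))
    (fun z hz => h.hiddenState_mulVec_eq_zero hb (hy b ▸ outer_mulVec_eq_zero hz))

end IsLHSModel

theorem not_isLHSModel_of_linearIndependent [Finite n] [Nonempty α] {σ : α → ξ → Matrix n n ℂ}
    {x y : ξ} {v w : α → n → ℂ} (hx : ∀ a, σ a x = outer (v a)) (hy : ∀ b, σ b y = outer (w b))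
    (hvw : ∀ a b, LinearIndependent ℂ ![v a, w b]) (P : α → ξ → Λ → ℝ) (τ : Λ → Matrix n n ℂ) :
    ¬ IsLHSModel σ P τ := by
  intro h
  obtain ⟨a⟩ := ‹Nonempty α›
  have hσ : σ a x = 0 := by
    simp only [h.eq_sum a x, h.hiddenState_eq_zero hx hy hvw, smul_zero, Finset.sum_const_zero]
  exact (hvw a a).ne_zero 0 (outer_eq_zero_iff.mp (hx a ▸ hσ))

end LHS

section Steering

/-- The partial inner product `⟨u|ψ⟩` over the first tensor factor: the unnormalized state to which
the second factor is steered when the first is found in the state `u`. -/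
def partialInner {m n : Type*} [Fintype m] (u : m → ℂ) (ψ : m × n → ℂ) : n → ℂ :=
  fun j => ∑ i, star (u i) * ψ (i, j)

theorem condStateBC_outer {X : Matrix (Fin 2) (Fin 2) ℂ} {a : Fin 2} {u : Fin 2 → ℂ}
    (hu : Proj a X = outer u) (ψ : Fin 2 × Fin 2 × Fin 2 → ℂ) :
    condStateBC (outer ψ) X a = outer (partialInner u ψ) := by
  ext j k
  simp only [condStateBC, trA3, hu, outer, RCLike.star_def, Prod.mk.eta, mul_apply,
    kroneckerMap_apply, of_apply, one_apply, mul_ite, mul_one, mul_zero, ite_mul, zero_mul,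
    Fintype.sum_prod_type, Finset.sum_ite_eq, Finset.mem_univ, ↓reduceIte, Fin.sum_univ_two,
    partialInner, star_add, star_mul', RingHomCompTriple.comp_apply, RingHom.id_apply]
  ring

theorem partialInner_star_smul_add_star_smul {m n : Type*} [Fintype m] (s t : ℂ) (u u' : m → ℂ)
    (ψ : m × n → ℂ) :
    partialInner (star s • u + star t • u') ψ = s • partialInner u ψ + t • partialInner u' ψ := by
  ext j
  simp [partialInner, Finset.mul_sum, Finset.sum_add_distrib, add_mul, mul_assoc]

theorem bisepA_of_partialInner_eq_zero {dB : ℕ} {ψ : Fin 2 × Fin dB × Fin 2 → ℂ} {u : Fin 2 → ℂ}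
    (hu : u ≠ 0) (h : partialInner u ψ = 0) : BisepA ψ := by
  have hψ (j) : star (u 0) * ψ (0, j) + star (u 1) * ψ (1, j) = 0 := by
    simpa [partialInner] using congrFun h j
  by_cases hu0 : u 0 = 0
  · have hu1 : u 1 ≠ 0 := fun hu1 => hu (funext (Fin.forall_fin_two.mpr ⟨hu0, hu1⟩))
    have hψ1 (j) : ψ (1, j) = 0 := by simpa [hu0, hu1] using hψ j
    exact ⟨![1, 0], fun j => ψ (0, j), Fin.forall_fin_two.mpr ⟨by simp, by simp [hψ1]⟩⟩
  · have hu0' : star (u 0) ≠ 0 := star_ne_zero.mpr hu0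
    have hψ0 (j) : ψ (0, j) = -(star (u 1) / star (u 0)) * ψ (1, j) := by
      field_simp
      linear_combination hψ j
    exact ⟨![-(star (u 1) / star (u 0)), 1], fun j => ψ (1, j),
      Fin.forall_fin_two.mpr ⟨fun j k => hψ0 (j, k), by simp⟩⟩

theorem linearIndependent_partialInner {dB : ℕ} {ψ : Fin 2 × Fin dB × Fin 2 → ℂ}
    (hψ : ¬ BisepA ψ) {u u' : Fin 2 → ℂ} (hu : LinearIndependent ℂ ![u, u']) :
    LinearIndependent ℂ ![partialInner u ψ, partialInner u' ψ] := by
  refine LinearIndependent.pair_iff.mpr fun s t hst => ?_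
  rw [← partialInner_star_smul_add_star_smul] at hst
  have hsum : star s • u + star t • u' = 0 := by
    by_contra hne
    exact hψ (bisepA_of_partialInner_eq_zero hne hst)
  simpa using LinearIndependent.pair_iff.mp hu _ _ hsum

/-- The eigenvector of `XA x` for the outcome `a`, i.e. for the eigenvalue `(-1) ^ a`. -/
def eigvecXA (a x : Fin 2) : Fin 2 → ℂ :=
  (√2 : ℂ)⁻¹ • ![1, (-1) ^ (a : ℕ) * I ^ (x : ℕ)]

theorem proj_XA (a x : Fin 2) : Proj a (XA x) = outer (eigvecXA a x) := by
  have hsqrt : (√2 : ℂ)⁻¹ * star (√2 : ℂ)⁻¹ = 2⁻¹ := by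
    rw [star_inv₀, RCLike.star_def, conj_ofReal, ← mul_inv, ← ofReal_mul,
      Real.mul_self_sqrt zero_le_two, ofReal_ofNat]
  rw [eigvecXA, outer_smul, hsqrt, Proj]
  congr 1
  ext i j
  fin_cases a <;> fin_cases x <;> fin_cases i <;> fin_cases j <;> simp [XA, sx, sy, outer]

theorem linearIndependent_eigvecXA (a b : Fin 2) :
    LinearIndependent ℂ ![eigvecXA a 0, eigvecXA b 1] := by
  have hphase : (-1 : ℂ) ^ (b : ℕ) * I - (-1) ^ (a : ℕ) ≠ 0 := by
    fin_cases a <;> fin_cases b <;> simp [Complex.ext_iff]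
  refine (LinearIndependent.pair_smul_iff (inv_ne_zero (by simp))).mpr <|
    LinearIndependent.pair_iff.mpr fun s t hst => ?_
  have hst0 : s + t = 0 := by simpa using congrFun hst 0
  have hst1 : s * (-1) ^ (a : ℕ) + t * ((-1) ^ (b : ℕ) * I) = 0 := by simpa using congrFun hst 1
  have ht_mul : t * ((-1) ^ (b : ℕ) * I - (-1) ^ (a : ℕ)) = 0 := by
    linear_combination hst1 - (-1) ^ (a : ℕ) * hst0
  have ht : t = 0 := (mul_eq_zero.mp ht_mul).resolve_right hphase
  exact ⟨by simpa [ht] using hst0, ht⟩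

end Steering

theorem not_bisepA_ggHZ {θ : ℝ} (hcos : Real.cos θ ≠ 0) (hsin : Real.sin θ ≠ 0) :
    ¬ BisepA (ggHZ θ) := by
  rintro ⟨u, v, huv⟩
  have h000 : (Real.cos θ : ℂ) = u 0 * v (0, 0) := huv 0 0 0
  have h011 : 0 = u 0 * v (1, 1) := huv 0 1 1
  have h111 : (Real.sin θ : ℂ) = u 1 * v (1, 1) := huv 1 1 1
  rcases mul_eq_zero.mp h011.symm with hu | hv
  · exact hcos (ofReal_eq_zero.mp (by rw [h000, hu, zero_mul]))
  · exact hsin (ofReal_eq_zero.mp (by rw [h111, hv, mul_zero]))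

theorem stmt5_general {Λ : Type*} [Fintype Λ] {ψ : Fin 2 × Fin 2 × Fin 2 → ℂ} (hψ : ¬ BisepA ψ)
    (P : Fin 2 → Fin 2 → Λ → ℝ) (τ : Λ → Matrix (Fin 2 × Fin 2) (Fin 2 × Fin 2) ℂ) :
    ¬ IsLHSModel (fun a x => condStateBC (outer ψ) (XA x) a) P τ :=
  not_isLHSModel_of_linearIndependent (x := 0) (y := 1)
    (fun a => condStateBC_outer (proj_XA a 0) ψ) (fun b => condStateBC_outer (proj_XA b 1) ψ)
    (fun a b => linearIndependent_partialInner hψ (linearIndependent_eigvecXA a b)) P τ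

/-- the assemblage on the Bob–Charlie pair prepared from the generalized GHZ state
by Alice's measurements `σx, σy` admits no LHS-type decomposition. -/
theorem stmt5 (θ : ℝ) (hθ : 0 < θ) (hθ' : θ < Real.pi / 2) :
    ¬ ∃ (n : ℕ) (p : Fin n → ℝ) (ρBC : Fin n → Matrix (Fin 2 × Fin 2) (Fin 2 × Fin 2) ℂ)
      (PA : Fin 2 → Fin 2 → Fin n → ℝ),
      (∀ l, 0 ≤ p l) ∧ (∑ l, p l) = 1 ∧
      (∀ l, (ρBC l).PosSemidef ∧ (ρBC l).trace = 1) ∧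
      (∀ a x l, 0 ≤ PA a x l ∧ PA a x l ≤ 1) ∧
      (∀ x l, ∑ a, PA a x l = 1) ∧
      (∀ a x, condStateBC (outer (ggHZ θ)) (XA x) a
        = ∑ l, ((p l * PA a x l : ℝ) : ℂ) • ρBC l) := by
  rintro ⟨n, p, ρ, PA, hp, -, hρ, hPA, hPA1, hσ⟩
  have hcos : Real.cos θ ≠ 0 := (Real.cos_pos_of_mem_Ioo ⟨by linarith, hθ'⟩).ne'
  have hsin : Real.sin θ ≠ 0 := (Real.sin_pos_of_pos_of_lt_pi hθ (by linarith)).ne'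
  refine stmt5_general (not_bisepA_ggHZ hcos hsin) PA (fun l => p l • ρ l)
    ⟨fun l => (hρ l).1.smul (hp l), fun a x l => (hPA a x l).1, hPA1, fun a x => ?_⟩
  simp only [hσ, Complex.coe_smul, smul_smul, mul_comm]

end Paper
end
end

section
/- Let ρ be a qubit density matrix and let {Π_{c|0}}_{c∈{0,1}} and {Π_{c|1}}_{c∈{0,1}} be two mutually unbiased rank-one projective qubit measurements. Then for all outcomes c, c' ∈ {0,1}: Tr(Π_{c|0} ρ) + Tr(Π_{c'|1} ρ) ≤ 1 + 1/√2. -/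
open Matrix Complex
open scoped Matrix Kronecker ComplexOrder

noncomputable section
namespace Paper

/-!
Equip matrices with the semi-inner product `⟪A, B⟫ = Tr (B ρ A†)`. A projection `P` satisfies
`⟪P, 1⟫ = ‖P‖² = Tr (P ρ)`, so that `‖P‖² + ‖Q‖² = ⟪P + Q, 1⟫ ≤ ‖P + Q‖ ‖1‖`. The cross term of
`‖P + Q‖²` is controlled by the overlap of the projections: `⟪P, Q⟫ = ⟪Q P, Q⟫ ≤ ‖Q P‖ ‖Q‖`, and
`‖Q P‖² = Tr (PQP · PρP) ≤ Tr (P Q) ‖P‖²`. Hence `‖P + Q‖² ≤ (1 + √Tr (P Q)) (‖P‖² + ‖Q‖²)`, and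
since `‖1‖² = Tr ρ`, cancelling one factor `‖P‖² + ‖Q‖²` bounds it by `(1 + √Tr (P Q)) Tr ρ`.
-/

variable {𝕜 : Type*} [RCLike 𝕜]

section InnerProductSpace

variable {E : Type*} [SeminormedAddCommGroup E] [InnerProductSpace 𝕜 E] {x y z : E} {k : ℝ}

theorem norm_add_sq_le_of_re_inner_le (hk : 0 ≤ k)
    (hxy : RCLike.re (inner 𝕜 x y) ≤ k * ‖x‖ * ‖y‖) :
    ‖x + y‖ ^ 2 ≤ (1 + k) * (‖x‖ ^ 2 + ‖y‖ ^ 2) := by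
  have amgm : k * (2 * ‖x‖ * ‖y‖) ≤ k * (‖x‖ ^ 2 + ‖y‖ ^ 2) :=
    mul_le_mul_of_nonneg_left (two_mul_le_add_sq ‖x‖ ‖y‖) hk
  rw [norm_add_sq (𝕜 := 𝕜)]
  linarith

theorem norm_sq_add_norm_sq_le_of_re_inner_le (hk : 0 ≤ k)
    (hx : RCLike.re (inner 𝕜 x z) = ‖x‖ ^ 2) (hy : RCLike.re (inner 𝕜 y z) = ‖y‖ ^ 2)
    (hxy : RCLike.re (inner 𝕜 x y) ≤ k * ‖x‖ * ‖y‖) :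
    ‖x‖ ^ 2 + ‖y‖ ^ 2 ≤ (1 + k) * ‖z‖ ^ 2 := by
  set s := ‖x‖ ^ 2 + ‖y‖ ^ 2
  have s_le : s ≤ ‖x + y‖ * ‖z‖ := by
    calc s = RCLike.re (inner 𝕜 (x + y) z) := by rw [inner_add_left, map_add, hx, hy]
      _ ≤ ‖x + y‖ * ‖z‖ := re_inner_le_norm _ _
  have s_nonneg : 0 ≤ s := by positivity
  have s_mul_s_le : s * s ≤ s * ((1 + k) * ‖z‖ ^ 2) := by
    calc s * s ≤ (‖x + y‖ * ‖z‖) * (‖x + y‖ * ‖z‖) := mul_self_le_mul_self s_nonneg s_le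
      _ = ‖x + y‖ ^ 2 * ‖z‖ ^ 2 := by ring
      _ ≤ (1 + k) * s * ‖z‖ ^ 2 := by gcongr; exact norm_add_sq_le_of_re_inner_le hk hxy
      _ = s * ((1 + k) * ‖z‖ ^ 2) := by ring
  rcases s_nonneg.eq_or_lt with s_zero | s_pos
  · rw [← s_zero]; positivity
  · exact le_of_mul_le_mul_left s_mul_s_le s_pos

end InnerProductSpace

section Frobenius

open scoped Matrix.Norms.Frobenius MatrixOrder

variable {m n : Type*} [Fintype m] [Fintype n]

theorem re_trace_conjTranspose_mul_self_eq_norm_sq (A : Matrix m n 𝕜) :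
    RCLike.re (Aᴴ * A).trace = ‖A‖ ^ 2 := by
  have norm_sq_eq : ‖A‖ ^ 2 = ∑ i, ∑ j, ‖A i j‖ ^ 2 := by
    rw [frobenius_norm_def, ← Real.sqrt_eq_rpow, Real.sq_sqrt (by positivity)]
    simp only [Real.rpow_two]
  rw [norm_sq_eq, Finset.sum_comm]
  simp only [trace, diag_apply, mul_apply, conjTranspose_apply, map_sum, RCLike.star_def,
    RCLike.conj_mul, ← RCLike.ofReal_pow, RCLike.ofReal_re]

theorem re_trace_mul_le_of_posSemidef {A B : Matrix n n 𝕜} (hA : A.PosSemidef)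
    (hB : B.PosSemidef) :
    RCLike.re (A * B).trace ≤ RCLike.re A.trace * RCLike.re B.trace := by
  classical
  obtain ⟨X, rfl⟩ := CStarAlgebra.nonneg_iff_eq_star_mul_self.mp hA.nonneg
  obtain ⟨Y, rfl⟩ := CStarAlgebra.nonneg_iff_eq_star_mul_self.mp hB.nonneg
  have trace_eq : (Xᴴ * X * (Yᴴ * Y)).trace = ((X * Yᴴ)ᴴ * (X * Yᴴ)).trace := by
    rw [← Matrix.mul_assoc, trace_mul_comm, conjTranspose_mul, conjTranspose_conjTranspose]
    simp only [Matrix.mul_assoc]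
  simp only [star_eq_conjTranspose, trace_eq, re_trace_conjTranspose_mul_self_eq_norm_sq]
  calc ‖X * Yᴴ‖ ^ 2 ≤ (‖X‖ * ‖Yᴴ‖) ^ 2 := by gcongr; exact frobenius_norm_mul X Yᴴ
    _ = ‖X‖ ^ 2 * ‖Y‖ ^ 2 := by rw [frobenius_norm_conjTranspose, mul_pow]

end Frobenius

section StarProjection

variable {n : Type*} [Fintype n] {ρ P Q : Matrix n n 𝕜}

theorem trace_mul_mul_conjTranspose_of_isStarProjection (hP : IsStarProjection P)
    (A : Matrix n n 𝕜) : (P * A * Pᴴ).trace = (P * A).trace := by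
  have star_P : Pᴴ = P := hP.isSelfAdjoint
  rw [trace_mul_comm, star_P, ← Matrix.mul_assoc, hP.isIdempotentElem.eq]

theorem re_trace_mul_mul_mul_conjTranspose_le_of_isStarProjection (hρ : ρ.PosSemidef)
    (hP : IsStarProjection P) (hQ : IsStarProjection Q) :
    RCLike.re (Q * P * ρ * (Q * P)ᴴ).trace ≤
      RCLike.re (P * Q).trace * RCLike.re (P * ρ).trace := by
  have star_P : Pᴴ = P := hP.isSelfAdjoint
  have star_Q : Qᴴ = Q := hQ.isSelfAdjoint
  have trace_eq : (Q * P * ρ * (Q * P)ᴴ).trace = (P * Q * Pᴴ * (P * ρ * Pᴴ)).trace := by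
    calc (Q * P * ρ * (Q * P)ᴴ).trace
        = (P * (Q * Q) * P * ρ).trace := by
          rw [trace_mul_comm, conjTranspose_mul, star_P, star_Q]
          simp only [Matrix.mul_assoc]
      _ = (P * (P * Q * (P * P) * ρ)).trace := by
          rw [hQ.isIdempotentElem.eq, hP.isIdempotentElem.eq]
          simp only [← Matrix.mul_assoc, hP.isIdempotentElem.eq]
      _ = (P * Q * Pᴴ * (P * ρ * Pᴴ)).trace := by
          rw [trace_mul_comm, star_P]
          simp only [Matrix.mul_assoc]
  have hQ_posSemidef : Q.PosSemidef := by
    simpa only [star_Q, hQ.isIdempotentElem.eq] using posSemidef_conjTranspose_mul_self Q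
  rw [trace_eq, ← trace_mul_mul_conjTranspose_of_isStarProjection hP Q,
    ← trace_mul_mul_conjTranspose_of_isStarProjection hP ρ]
  exact re_trace_mul_le_of_posSemidef (hQ_posSemidef.mul_mul_conjTranspose_same P)
    (hρ.mul_mul_conjTranspose_same P)

theorem stmt9_general (hρ : ρ.PosSemidef) (hP : IsStarProjection P) (hQ : IsStarProjection Q) :
    RCLike.re (P * ρ).trace + RCLike.re (Q * ρ).trace ≤
      (1 + √(RCLike.re (P * Q).trace)) * RCLike.re ρ.trace := by
  classical
  let := ρ.toMatrixSeminormedAddCommGroup hρ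
  let := ρ.toMatrixInnerProductSpace hρ
  have inner_def (A B : Matrix n n 𝕜) : inner 𝕜 A B = (B * ρ * Aᴴ).trace := rfl
  have norm_sq (A : Matrix n n 𝕜) : ‖A‖ ^ 2 = RCLike.re (A * ρ * Aᴴ).trace :=
    norm_sq_eq_re_inner A
  have norm_sq_proj {R : Matrix n n 𝕜} (hR : IsStarProjection R) :
      ‖R‖ ^ 2 = RCLike.re (R * ρ).trace := by
    rw [norm_sq, trace_mul_mul_conjTranspose_of_isStarProjection hR]
  have inner_proj_one {R : Matrix n n 𝕜} (hR : IsStarProjection R) :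
      RCLike.re (inner 𝕜 R 1) = ‖R‖ ^ 2 := by
    have star_R : Rᴴ = R := hR.isSelfAdjoint
    rw [norm_sq_proj hR, inner_def, Matrix.one_mul, trace_mul_comm, star_R]
  have norm_mul_le : ‖Q * P‖ ≤ √(RCLike.re (P * Q).trace) * ‖P‖ := by
    rw [← Real.sqrt_sq (norm_nonneg P), ← Real.sqrt_mul' _ (sq_nonneg _), norm_sq_proj hP]
    apply Real.le_sqrt_of_sq_le
    rw [norm_sq]
    exact re_trace_mul_mul_mul_conjTranspose_le_of_isStarProjection hρ hP hQ
  have inner_eq : inner 𝕜 P Q = inner 𝕜 (Q * P) Q := by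
    rw [inner_def, inner_def, conjTranspose_mul, ← Matrix.mul_assoc, Matrix.mul_assoc Q,
      trace_mul_mul_conjTranspose_of_isStarProjection hQ]
  have inner_le : RCLike.re (inner 𝕜 P Q) ≤ √(RCLike.re (P * Q).trace) * ‖P‖ * ‖Q‖ := by
    rw [inner_eq]
    exact (re_inner_le_norm _ _).trans (by gcongr)
  simpa only [norm_sq_proj hP, norm_sq_proj hQ, norm_sq_proj (.one _), Matrix.one_mul] using
    norm_sq_add_norm_sq_le_of_re_inner_le (Real.sqrt_nonneg _) (inner_proj_one hP)
      (inner_proj_one hQ) inner_le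

end StarProjection

/-- the fine-grained uncertainty relation for two mutually unbiased rank-one
projective qubit measurements: `Tr(Π_{c|0} ρ) + Tr(Π_{c'|1} ρ) ≤ 1 + 1/√2`. -/
theorem stmt9 (ρ : Matrix (Fin 2) (Fin 2) ℂ) (hρ : ρ.PosSemidef) (htr : ρ.trace = 1)
    (Pr : Fin 2 → Fin 2 → Matrix (Fin 2) (Fin 2) ℂ)
    (hherm : ∀ c m, (Pr c m).IsHermitian)
    (hidem : ∀ c m, Pr c m * Pr c m = Pr c m)
    (hrank : ∀ c m, (Pr c m).trace = 1)
    (hsum : ∀ m, Pr 0 m + Pr 1 m = 1)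
    (hmub : ∀ c c', (Pr c 0 * Pr c' 1).trace = 1 / 2) :
    ∀ c c' : Fin 2, ((Pr c 0 * ρ).trace).re + ((Pr c' 1 * ρ).trace).re ≤ 1 + 1 / Real.sqrt 2 := by
  intro c c'
  have isStarProjection (a m : Fin 2) : IsStarProjection (Pr a m) := ⟨hidem a m, hherm a m⟩
  simpa [htr, hmub] using stmt9_general hρ (isStarProjection c 0) (isStarProjection c' 1)

end Paper
end
end

section
/- Let θ ∈ (0, π/2) and let |ψ(θ)⟩ = cos θ·|000⟩ + sin θ·|111⟩ be the generalized GHZ state. With the observables X₀ = σx, X₁ = σy (Alice), Y₀ = sin 2θ·σx + cos 2θ·σz, Y₁ = cos 2θ·σz + sin 2θ·σy (Bob), and Z₀ = σx, Z₁ = σy (Charlie), each of the four conditional probabilities P(0_{Z₀}|1_{X₀}1_{Y₀}), P(0_{Z₀}|0_{X₁}1_{Y₁}), P(0_{Z₁}|0_{X₀}1_{Y₁}), P(0_{Z₁}|0_{X₁}1_{Y₀}) is well defined and equals 1; consequently CP = 4, the algebraic maximum. -/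
open Matrix Complex
open scoped Matrix Kronecker ComplexOrder

noncomputable section
namespace Paper

/-- Bob's tilted observables `Y₀ = sin 2θ·σx + cos 2θ·σz`, `Y₁ = cos 2θ·σz + sin 2θ·σy`. -/
def YBt (θ : ℝ) : Fin 2 → Matrix (Fin 2) (Fin 2) ℂ := fun y =>
  if y = 0 then (Real.sin (2 * θ) : ℂ) • sx + (Real.cos (2 * θ) : ℂ) • sz
  else (Real.cos (2 * θ) : ℂ) • sz + (Real.sin (2 * θ) : ℂ) • sy

/-!
The equatorial observables `cos φ σx + sin φ σy` have matrix `!![0, ū; u, 0]` with `u = e^{iφ}`.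
If Alice obtains `0` for phase `u`, her projector has constant diagonal and carries only a phase
off the diagonal. Bob's tilt is chosen so that his projector for outcome `1` swaps the two
weights: its diagonal is `(sin² θ, cos² θ)`. Weighted by the probabilities `(cos² θ, sin² θ)`
of the state, this makes the diagonal of Charlie's conditional state constant, so that he is left
with `sin² θ cos² θ` times the projector of the equatorial observable of phase `w`, where
`u v w = -1` and `v` is Bob's phase. The four events of `CP` are the phase triples
`(-1, 1, 1)`, `(i, i, 1)`, `(1, i, i)` and `(i, 1, i)`; the sign in the first one turns
Alice's outcome `1` into outcome `0`.
-/

section Projectors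

variable {d : ℕ}

theorem Proj_one_eq_Proj_zero_neg (O : Matrix (Fin d) (Fin d) ℂ) : Proj 1 O = Proj 0 (-O) := by
  simp [Proj]

theorem isIdempotentElem_Proj {O : Matrix (Fin d) (Fin d) ℂ} (hO : O * O = 1) (a : Fin 2) :
    IsIdempotentElem (Proj a O) := by
  obtain ⟨S, hS, hP⟩ : ∃ S, S * S = 1 ∧ Proj a O = (2 : ℂ)⁻¹ • (1 + S) :=
    ⟨if a = 0 then O else -O, by split_ifs <;> simp only [neg_mul_neg, hO], rfl⟩
  have hsq : (1 + S) * (1 + S) = (2 : ℂ) • (1 + S) := by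
    rw [add_mul, mul_add, mul_add, hS, two_smul]
    simp only [one_mul, mul_one]
    abel
  rw [IsIdempotentElem, hP, smul_mul_smul_comm, hsq]
  module

theorem condProb_eq_one_of_Proj_mul_eq_self {Z σ : Matrix (Fin 2) (Fin 2) ℂ} {c : Fin 2}
    (hZ : Proj c Z * σ = σ) (hσ : σ.trace.re ≠ 0) : condProb Z σ c = 1 := by
  rw [condProb, hZ, div_self hσ]

theorem condState_one_left {dA dB : ℕ}
    (ρ : Matrix (Fin dA × Fin dB × Fin 2) (Fin dA × Fin dB × Fin 2) ℂ)
    (X : Matrix (Fin dA) (Fin dA) ℂ) (Y : Matrix (Fin dB) (Fin dB) ℂ) (b : Fin 2) :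
    condState ρ X Y 1 b = condState ρ (-X) Y 0 b := by
  rw [condState, Proj_one_eq_Proj_zero_neg, condState]

end Projectors

section GHZ

/-- The vector `α₀|000⟩ + α₁|111⟩`, of which `ggHZ θ` is the case `α = (cos θ, sin θ)`. -/
def ghzVec (α : Fin 2 → ℂ) : Fin 2 × Fin 2 × Fin 2 → ℂ := fun i =>
  if i.1 = i.2.2 ∧ i.2.1 = i.2.2 then α i.2.2 else 0

theorem ggHZ_eq_ghzVec (θ : ℝ) : ggHZ θ = ghzVec ![(Real.cos θ : ℂ), (Real.sin θ : ℂ)] := by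
  funext ⟨i, j, k⟩
  fin_cases i <;> fin_cases j <;> fin_cases k <;> simp [ggHZ, ghzVec]

theorem trAB_kronecker_mul_outer_ghzVec (P Q : Matrix (Fin 2) (Fin 2) ℂ) (α : Fin 2 → ℂ) :
    trAB ((P ⊗ₖ (Q ⊗ₖ (1 : Matrix (Fin 2) (Fin 2) ℂ))) * outer (ghzVec α)) =
      (P ⊙ Q)ᵀ ⊙ outer α := by
  ext i j
  fin_cases i <;> fin_cases j <;>
    simp [trAB, Matrix.mul_apply, Fintype.sum_prod_type, outer, ghzVec, Matrix.one_apply,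
      mul_assoc]

theorem condState_ggHZ (θ : ℝ) (X Y : Matrix (Fin 2) (Fin 2) ℂ) (a b : Fin 2) :
    condState (outer (ggHZ θ)) X Y a b =
      (Proj a X ⊙ Proj b Y)ᵀ ⊙ outer ![(Real.cos θ : ℂ), (Real.sin θ : ℂ)] := by
  rw [condState, ggHZ_eq_ghzVec, trAB_kronecker_mul_outer_ghzVec]

end GHZ

section Equatorial

/-- The qubit observable `cos φ σx + sin φ σy`, encoded by its phase `u = e^{iφ}`; it is defined
for all `u : ℂ` and is dichotomic when `u` has modulus one. -/
def equatorial (u : ℂ) : Matrix (Fin 2) (Fin 2) ℂ := !![0, star u; u, 0]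

/-- Bob's observable `sin 2θ (cos φ σx + sin φ σy) + cos 2θ σz` of phase `v = e^{iφ}`, which for
`v = 1` and `v = i` is `YBt θ 0` and `YBt θ 1`. -/
def tilted (θ : ℝ) (v : ℂ) : Matrix (Fin 2) (Fin 2) ℂ :=
  (Real.sin (2 * θ) : ℂ) • equatorial v + (Real.cos (2 * θ) : ℂ) • sz

theorem sx_eq_equatorial : sx = equatorial 1 := by
  simp [sx, equatorial]

theorem sy_eq_equatorial : sy = equatorial I := by
  simp [sy, equatorial]

theorem YBt_zero (θ : ℝ) : YBt θ 0 = tilted θ 1 := by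
  simp only [YBt, tilted, if_true, sx_eq_equatorial]

theorem YBt_one (θ : ℝ) : YBt θ 1 = tilted θ I := by
  simp only [YBt, tilted, one_ne_zero, if_false, sy_eq_equatorial, add_comm]

theorem equatorial_neg (u : ℂ) : equatorial (-u) = -equatorial u := by
  simp [equatorial]

theorem equatorial_mul_self {u : ℂ} (hu : star u * u = 1) : equatorial u * equatorial u = 1 := by
  simp [equatorial, Matrix.one_fin_two, ← hu, mul_comm]

theorem Proj_zero_equatorial (u : ℂ) :
    Proj 0 (equatorial u) = !![1 / 2, star u / 2; u / 2, 1 / 2] := by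
  ext i j
  fin_cases i <;> fin_cases j <;> simp [Proj, equatorial, div_eq_inv_mul]

theorem trace_Proj_zero_equatorial (u : ℂ) : (Proj 0 (equatorial u)).trace = 1 := by
  rw [Proj_zero_equatorial, Matrix.trace_fin_two_of, add_halves]

theorem Proj_one_tilted (θ : ℝ) (v : ℂ) :
    Proj 1 (tilted θ v) =
      !![(Real.sin θ : ℂ) ^ 2, -(Real.sin θ * Real.cos θ * star v);
        -(Real.sin θ * Real.cos θ * v), (Real.cos θ : ℂ) ^ 2] := by
  have hsq : (Real.sin θ : ℂ) ^ 2 + (Real.cos θ : ℂ) ^ 2 = 1 :=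
    mod_cast Real.sin_sq_add_cos_sq θ
  have hsin : (Real.sin (2 * θ) : ℂ) = 2 * Real.sin θ * Real.cos θ :=
    mod_cast Real.sin_two_mul θ
  have hcos : (Real.cos (2 * θ) : ℂ) = (Real.cos θ : ℂ) ^ 2 - (Real.sin θ : ℂ) ^ 2 :=
    mod_cast Real.cos_two_mul' θ
  rw [Proj, tilted, hsin, hcos]
  ext i j
  fin_cases i <;> fin_cases j <;>
    simp [equatorial, sz, -ofReal_sin, -ofReal_cos] <;>
    grind

end Equatorial

section Steering

variable {u v w : ℂ}

theorem condState_ggHZ_equatorial_tilted (θ : ℝ) (hw : star w * w = 1) (huvw : u * v * w = -1) :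
    condState (outer (ggHZ θ)) (equatorial u) (tilted θ v) 0 1 =
      (((Real.sin θ * Real.cos θ) ^ 2 : ℝ) : ℂ) • Proj 0 (equatorial w) := by
  have huv : u * v = -star w := by linear_combination star w * huvw - u * v * hw
  have huv_star : star u * star v = -w := by rw [← star_mul', huv, star_neg, star_star]
  calc condState (outer (ggHZ θ)) (equatorial u) (tilted θ v) 0 1
      = (((Real.sin θ * Real.cos θ) ^ 2 : ℝ) : ℂ) •
          !![1 / 2, -(u * v) / 2; -(star u * star v) / 2, 1 / 2] := by
        rw [condState_ggHZ, Proj_zero_equatorial, Proj_one_tilted]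
        ext i j
        fin_cases i <;> fin_cases j <;>
          simp [outer, -ofReal_sin, -ofReal_cos] <;>
          ring
    _ = (((Real.sin θ * Real.cos θ) ^ 2 : ℝ) : ℂ) • Proj 0 (equatorial w) := by
        rw [huv, huv_star, neg_neg, neg_neg, Proj_zero_equatorial]

theorem trace_condState_ggHZ_pos {θ : ℝ} (hθ : Real.sin (2 * θ) ≠ 0) (hw : star w * w = 1)
    (huvw : u * v * w = -1) :
    0 < (condState (outer (ggHZ θ)) (equatorial u) (tilted θ v) 0 1).trace.re := by
  have hsc : Real.sin θ * Real.cos θ ≠ 0 := by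
    rwa [Real.sin_two_mul, mul_assoc, mul_ne_zero_iff_left two_ne_zero] at hθ
  rw [condState_ggHZ_equatorial_tilted θ hw huvw, Matrix.trace_smul, trace_Proj_zero_equatorial,
    smul_eq_mul, mul_one, ofReal_re]
  exact sq_pos_of_ne_zero hsc

theorem condProb_ggHZ_eq_one {θ : ℝ} (hθ : Real.sin (2 * θ) ≠ 0) (hw : star w * w = 1)
    (huvw : u * v * w = -1) :
    condProb (equatorial w)
      (condState (outer (ggHZ θ)) (equatorial u) (tilted θ v) 0 1) 0 = 1 := by
  refine condProb_eq_one_of_Proj_mul_eq_self ?_ (trace_condState_ggHZ_pos hθ hw huvw).ne'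
  rw [condState_ggHZ_equatorial_tilted θ hw huvw, mul_smul_comm,
    (isIdempotentElem_Proj (equatorial_mul_self hw) 0).eq]

end Steering

theorem stmt10_general (θ : ℝ) (hθ : Real.sin (2 * θ) ≠ 0) :
    PosEvents (outer (ggHZ θ)) (XA 0) (XA 1) (YBt θ 0) (YBt θ 1) ∧
    condProb sx (condState (outer (ggHZ θ)) (XA 0) (YBt θ 0) 1 1) 0 = 1 ∧
    condProb sx (condState (outer (ggHZ θ)) (XA 1) (YBt θ 1) 0 1) 0 = 1 ∧
    condProb sy (condState (outer (ggHZ θ)) (XA 0) (YBt θ 1) 0 1) 0 = 1 ∧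
    condProb sy (condState (outer (ggHZ θ)) (XA 1) (YBt θ 0) 0 1) 0 = 1 ∧
    CP (outer (ggHZ θ)) (XA 0) (XA 1) (YBt θ 0) (YBt θ 1) = 4 := by
  have hX₀ : XA 0 = equatorial 1 := sx_eq_equatorial
  have hX₁ : XA 1 = equatorial I := sy_eq_equatorial
  have h_one : star (1 : ℂ) * 1 = 1 := by simp
  have h_I : star I * I = 1 := by simp
  have h₀₀ : (-1 : ℂ) * 1 * 1 = -1 := by norm_num
  have h₁₁ : I * I * 1 = -1 := by simp
  have h₀₁ : 1 * I * I = -1 := by simp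
  have h₁₀ : I * 1 * I = -1 := by simp
  simp only [PosEvents, CP, hX₀, hX₁, YBt_zero, YBt_one, sx_eq_equatorial, sy_eq_equatorial,
    condState_one_left, ← equatorial_neg]
  rw [condProb_ggHZ_eq_one hθ h_one h₀₀, condProb_ggHZ_eq_one hθ h_one h₁₁,
    condProb_ggHZ_eq_one hθ h_I h₀₁, condProb_ggHZ_eq_one hθ h_I h₁₀]
  exact ⟨⟨trace_condState_ggHZ_pos hθ h_one h₀₀, trace_condState_ggHZ_pos hθ h_one h₁₁,
    trace_condState_ggHZ_pos hθ h_I h₀₁, trace_condState_ggHZ_pos hθ h_I h₁₀⟩,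
    rfl, rfl, rfl, rfl, by norm_num⟩

/-- the generalized GHZ state attains the algebraic maximum `CP = 4` for the
observables `X₀ = σx, X₁ = σy`, `Y₀ = sin 2θ·σx + cos 2θ·σz, Y₁ = cos 2θ·σz + sin 2θ·σy`,
`Z₀ = σx, Z₁ = σy`: each of the four conditional probabilities is well defined and equals 1. -/
theorem stmt10 (θ : ℝ) (hθ : 0 < θ) (hθ' : θ < Real.pi / 2) :
    PosEvents (outer (ggHZ θ)) (XA 0) (XA 1) (YBt θ 0) (YBt θ 1) ∧
    condProb sx (condState (outer (ggHZ θ)) (XA 0) (YBt θ 0) 1 1) 0 = 1 ∧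
    condProb sx (condState (outer (ggHZ θ)) (XA 1) (YBt θ 1) 0 1) 0 = 1 ∧
    condProb sy (condState (outer (ggHZ θ)) (XA 0) (YBt θ 1) 0 1) 0 = 1 ∧
    condProb sy (condState (outer (ggHZ θ)) (XA 1) (YBt θ 0) 0 1) 0 = 1 ∧
    CP (outer (ggHZ θ)) (XA 0) (XA 1) (YBt θ 0) (YBt θ 1) = 4 :=
  stmt10_general θ (Real.sin_pos_of_pos_of_lt_pi (by linarith) (by linarith)).ne'

end Paper
end
end

section
/- Let θ ∈ (0, π/2), let |ψ(θ)⟩ = cos θ·|000⟩ + sin θ·|111⟩ be the generalized GHZ state, and let X₀ = σx, X₁ = σy, Y₀ = (σx+σz)/√2, Y₁ = (σy+σz)/√2. Then the unnormalized conditional states on Charlie's qubit satisfy, for all a, b ∈ {0,1}: σ^C_{a,b|X₁,Y₀} = σ^C_{a,b|X₀,Y₁} and σ^C_{a,b|X₁,Y₁} = σ^C_{1−a,b|X₀,Y₀}. -/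
open Matrix Complex
open scoped Matrix Kronecker ComplexOrder

noncomputable section
namespace Paper

/-!
The phase gate `S = diag(1, i)` acts by conjugation as `σx ↦ σy`, `σy ↦ -σx`, `σz ↦ σz`. Applying
`S` on Alice's side and `S⁻¹` on Bob's side multiplies `|000⟩` and `|111⟩` by `1`, so it fixes every
generalized GHZ state, while it turns `(X₀, Y₁)` into `(X₁, Y₀)` and `(X₁, Y₁)` into `(-X₀, Y₀)`.
Cyclicity of the partial trace makes conditional states invariant under such a simultaneous
change, and negating an observable exchanges its two outcomes.
-/

section ConditionalStates

variable {d dA dB : ℕ}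

lemma Proj_neg (a : Fin 2) (O : Matrix (Fin d) (Fin d) ℂ) : Proj a (-O) = Proj (1 - a) O := by
  fin_cases a <;> simp [Proj]

lemma Proj_units_conj (a : Fin 2) (U : (Matrix (Fin d) (Fin d) ℂ)ˣ)
    (O : Matrix (Fin d) (Fin d) ℂ) :
    Proj a (U.val * O * U⁻¹.val) = U.val * Proj a O * U⁻¹.val := by
  unfold Proj
  split_ifs <;> simp [mul_add, add_mul, -coe_units_inv]

lemma trAB_kronecker_one_mul_comm (A : Matrix (Fin dA) (Fin dA) ℂ) (B : Matrix (Fin dB) (Fin dB) ℂ)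
    (M : Matrix (Fin dA × Fin dB × Fin 2) (Fin dA × Fin dB × Fin 2) ℂ) :
    trAB ((A ⊗ₖ (B ⊗ₖ (1 : Matrix (Fin 2) (Fin 2) ℂ))) * M) =
      trAB (M * (A ⊗ₖ (B ⊗ₖ (1 : Matrix (Fin 2) (Fin 2) ℂ)))) := by
  ext i j
  have left_entry : trAB ((A ⊗ₖ (B ⊗ₖ (1 : Matrix (Fin 2) (Fin 2) ℂ))) * M) i j =
      ∑ p : Fin dA × Fin dB, ∑ q : Fin dA × Fin dB,
        A p.1 q.1 * B p.2 q.2 * M (q.1, q.2, i) (p.1, p.2, j) := by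
    simp [trAB, mul_apply, Fintype.sum_prod_type, one_apply, mul_assoc]
  have right_entry : trAB (M * (A ⊗ₖ (B ⊗ₖ (1 : Matrix (Fin 2) (Fin 2) ℂ)))) i j =
      ∑ q : Fin dA × Fin dB, ∑ p : Fin dA × Fin dB,
        A p.1 q.1 * B p.2 q.2 * M (q.1, q.2, i) (p.1, p.2, j) := by
    simp [trAB, mul_apply, Fintype.sum_prod_type, one_apply, mul_comm]
  rw [left_entry, right_entry, Finset.sum_comm]

lemma condState_neg_left
    (ρ : Matrix (Fin dA × Fin dB × Fin 2) (Fin dA × Fin dB × Fin 2) ℂ)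
    (X : Matrix (Fin dA) (Fin dA) ℂ) (Y : Matrix (Fin dB) (Fin dB) ℂ) (a b : Fin 2) :
    condState ρ (-X) Y a b = condState ρ X Y (1 - a) b := by
  simp only [condState, Proj_neg]

lemma condState_units_conj
    {ρ : Matrix (Fin dA × Fin dB × Fin 2) (Fin dA × Fin dB × Fin 2) ℂ}
    {U : (Matrix (Fin dA) (Fin dA) ℂ)ˣ} {V : (Matrix (Fin dB) (Fin dB) ℂ)ˣ}
    (hρ : Commute (U.val ⊗ₖ (V.val ⊗ₖ (1 : Matrix (Fin 2) (Fin 2) ℂ))) ρ)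
    (X : Matrix (Fin dA) (Fin dA) ℂ) (Y : Matrix (Fin dB) (Fin dB) ℂ) (a b : Fin 2) :
    condState ρ (U.val * X * U⁻¹.val) (V.val * Y * V⁻¹.val) a b = condState ρ X Y a b := by
  set I₂ : Matrix (Fin 2) (Fin 2) ℂ := 1
  set W := U.val ⊗ₖ (V.val ⊗ₖ I₂)
  set W' := U⁻¹.val ⊗ₖ (V⁻¹.val ⊗ₖ I₂)
  set P := Proj a X ⊗ₖ (Proj b Y ⊗ₖ I₂)
  have inv_mul : W' * W = 1 := by
    simp only [W, W', I₂, ← mul_kronecker_mul, Units.inv_mul, mul_one, one_kronecker_one]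
  have proj_conj :
      Proj a (U.val * X * U⁻¹.val) ⊗ₖ (Proj b (V.val * Y * V⁻¹.val) ⊗ₖ I₂) = W * P * W' := by
    simp only [W, W', P, I₂, ← mul_kronecker_mul, Proj_units_conj, mul_one]
  calc trAB (Proj a (U.val * X * U⁻¹.val) ⊗ₖ (Proj b (V.val * Y * V⁻¹.val) ⊗ₖ I₂) * ρ)
      = trAB (W * (P * W' * ρ)) := by rw [proj_conj]; simp only [mul_assoc]
    _ = trAB (P * W' * ρ * W) := trAB_kronecker_one_mul_comm ..
    _ = trAB (P * (W' * W) * ρ) := by rw [mul_assoc _ ρ, ← hρ.eq]; simp only [mul_assoc]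
    _ = trAB (P * ρ) := by rw [inv_mul, mul_one]

end ConditionalStates

lemma commute_diagonal_outer {n : Type*} [Fintype n] [DecidableEq n] {w ψ : n → ℂ}
    (h : ∀ i j, ψ i ≠ 0 → ψ j ≠ 0 → w i = w j) : Commute (diagonal w) (outer ψ) := by
  ext i j
  rw [diagonal_mul, mul_diagonal, outer, of_apply]
  by_cases hi : ψ i = 0
  · simp [hi]
  by_cases hj : ψ j = 0
  · simp [hj]
  rw [h i j hi hj, mul_comm]

/-- The phase gate `S = diag(1, i)` on one qubit, as an invertible matrix so that conjugation by
`S` and by `S⁻¹` can be treated uniformly. -/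
def phaseGate : (Matrix (Fin 2) (Fin 2) ℂ)ˣ where
  val := diagonal ![1, I]
  inv := diagonal ![1, -I]
  val_inv := by ext i j; fin_cases i <;> fin_cases j <;> simp
  inv_val := by ext i j; fin_cases i <;> fin_cases j <;> simp

lemma val_phaseGate : phaseGate.val = diagonal ![1, I] := rfl

lemma val_inv_phaseGate : phaseGate⁻¹.val = diagonal ![1, -I] := rfl

lemma phaseGate_conj_sx : phaseGate.val * sx * phaseGate⁻¹.val = sy := by
  ext i j
  fin_cases i <;> fin_cases j <;> simp [val_phaseGate, val_inv_phaseGate, -coe_units_inv, sx, sy]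

lemma phaseGate_conj_sy : phaseGate.val * sy * phaseGate⁻¹.val = -sx := by
  ext i j
  fin_cases i <;> fin_cases j <;> simp [val_phaseGate, val_inv_phaseGate, -coe_units_inv, sx, sy]

lemma phaseGate_conj_sz : phaseGate.val * sz * phaseGate⁻¹.val = sz := by
  ext i j
  fin_cases i <;> fin_cases j <;> simp [val_phaseGate, val_inv_phaseGate, -coe_units_inv, sz]

lemma phaseGate_conj_XA_zero : phaseGate.val * XA 0 * phaseGate⁻¹.val = XA 1 :=
  phaseGate_conj_sx

lemma phaseGate_conj_XA_one : phaseGate.val * XA 1 * phaseGate⁻¹.val = -XA 0 :=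
  phaseGate_conj_sy

lemma phaseGate_conj_YB_zero : phaseGate.val * YB 0 * phaseGate⁻¹.val = YB 1 := by
  simp [YB, mul_add, add_mul, phaseGate_conj_sx, phaseGate_conj_sz, -coe_units_inv]

lemma phaseGate_inv_conj_YB_one : phaseGate⁻¹.val * YB 1 * phaseGate⁻¹⁻¹.val = YB 0 := by
  simp only [← phaseGate_conj_YB_zero, inv_inv, ← mul_assoc, Units.inv_mul, one_mul,
    Units.inv_mul_cancel_right]

lemma eq_zero_or_eq_one_of_ggHZ_ne_zero {θ : ℝ} {i : Fin 2 × Fin 2 × Fin 2} (hi : ggHZ θ i ≠ 0) :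
    i = (0, 0, 0) ∨ i = (1, 1, 1) := by
  by_contra! h
  simp [ggHZ, h.1, h.2] at hi

lemma commute_phaseGate_kronecker_ggHZ (θ : ℝ) :
    Commute (phaseGate.val ⊗ₖ (phaseGate⁻¹.val ⊗ₖ (1 : Matrix (Fin 2) (Fin 2) ℂ)))
      (outer (ggHZ θ)) := by
  rw [val_phaseGate, val_inv_phaseGate, ← diagonal_one, diagonal_kronecker_diagonal,
    diagonal_kronecker_diagonal]
  apply commute_diagonal_outer
  intro i j hi hj
  obtain rfl | rfl := eq_zero_or_eq_one_of_ggHZ_ne_zero hi <;>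
    obtain rfl | rfl := eq_zero_or_eq_one_of_ggHZ_ne_zero hj <;> simp

theorem stmt11_general {ρ : Matrix (Fin 2 × Fin 2 × Fin 2) (Fin 2 × Fin 2 × Fin 2) ℂ}
    (hρ : Commute (phaseGate.val ⊗ₖ (phaseGate⁻¹.val ⊗ₖ (1 : Matrix (Fin 2) (Fin 2) ℂ))) ρ)
    (a b : Fin 2) :
    condState ρ (XA 1) (YB 0) a b = condState ρ (XA 0) (YB 1) a b ∧
      condState ρ (XA 1) (YB 1) a b = condState ρ (XA 0) (YB 0) (1 - a) b := by
  constructor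
  · calc condState ρ (XA 1) (YB 0) a b
        = condState ρ (phaseGate.val * XA 0 * phaseGate⁻¹.val)
            (phaseGate⁻¹.val * YB 1 * phaseGate⁻¹⁻¹.val) a b := by
          rw [phaseGate_conj_XA_zero, phaseGate_inv_conj_YB_one]
      _ = condState ρ (XA 0) (YB 1) a b := condState_units_conj hρ ..
  · calc condState ρ (XA 1) (YB 1) a b
        = condState ρ (phaseGate.val * XA 1 * phaseGate⁻¹.val)
            (phaseGate⁻¹.val * YB 1 * phaseGate⁻¹⁻¹.val) a b := (condState_units_conj hρ ..).symm
      _ = condState ρ (-XA 0) (YB 0) a b := by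
          rw [phaseGate_conj_XA_one, phaseGate_inv_conj_YB_one]
      _ = condState ρ (XA 0) (YB 0) (1 - a) b := condState_neg_left ..

/-- symmetries of the GGHZ assemblage:
`σ^C_{a,b|X₁,Y₀} = σ^C_{a,b|X₀,Y₁}` and `σ^C_{a,b|X₁,Y₁} = σ^C_{1−a,b|X₀,Y₀}`. -/
theorem stmt11 (θ : ℝ) (hθ : 0 < θ) (hθ' : θ < Real.pi / 2) (a b : Fin 2) :
    condState (outer (ggHZ θ)) (XA 1) (YB 0) a b
      = condState (outer (ggHZ θ)) (XA 0) (YB 1) a b ∧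
    condState (outer (ggHZ θ)) (XA 1) (YB 1) a b
      = condState (outer (ggHZ θ)) (XA 0) (YB 0) (1 - a) b :=
  stmt11_general (commute_phaseGate_kronecker_ggHZ θ) a b

end Paper
end
end
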